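/- Let Ω, U, λ, u be as in the setting. If A ⊆ closure(Ω) is a connected set containing at least two points such that every point of A is a critical point of u, then u is constant on A and u(z) ≠ 0 for every z ∈ A. -/

import Mathlib

/-!
Suppose first that `Δ u z = 0` at some point `z` of the critical set `A`. Then `Δ u` is a multiple
of `u - u z` near `z`, so the lowest-order nonzero Taylor polynomial `P` of `u - u z` at `z` would
be harmonic. Since `z` is not isolated in `A`, the gradient of `P` vanishes along a tangent
direction `t` of the critical set. Differentiating along `t` and trading the second derivative
normal to `t` for the one along `t` (harmonicity) shows `P = 0`, so `u` is constant near `z`, hence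
everywhere.

Otherwise `Δ u` vanishes nowhere on `A`, so neither does `u`. At each point of `A` the Hessian of
`u` has rank at least one, which forces `A` to have Hausdorff dimension at most one. By Taylor's
formula `u` is 2-Hölder near critical points, so the connected set `u '' A` has Hausdorff dimension
at most one half, which makes it a single point.
-/

open Metric Set Filter Topology MeasureTheory

noncomputable section

abbrev E2 := EuclideanSpace ℝ (Fin 2)

/-- The Laplacian of `u`: the sum of the two pure second partial derivatives. -/
def lap (u : E2 → ℝ) (z : E2) : ℝ :=
  ∑ i : Fin 2, iteratedFDeriv ℝ 2 u z (fun _ => EuclideanSpace.single i 1)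

open Module Asymptotics InnerProductSpace
open scoped Nat Laplacian NNReal

section Taylor

variable {𝕜 E F : Type*} [NontriviallyNormedField 𝕜] [CharZero 𝕜]
  [NormedAddCommGroup E] [NormedSpace 𝕜 E] [NormedAddCommGroup F] [NormedSpace 𝕜 F]
  [CompleteSpace F] {f : E → F} {x : E} {n : ℕ}

theorem isBigO_sub_iteratedFDeriv_apply_diag (hf : AnalyticAt 𝕜 f x)
    (hlow : ∀ j < n, iteratedFDeriv 𝕜 j f x = 0) :
    (fun y ↦ f (x + y) - (n ! : 𝕜)⁻¹ • iteratedFDeriv 𝕜 n f x fun _ ↦ y) =O[𝓝 0]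
      fun y ↦ ‖y‖ ^ (n + 1) := by
  obtain ⟨p, r, hp⟩ := hf
  have hcoeff (j : ℕ) (y : E) :
      (p j fun _ ↦ y) = (j ! : 𝕜)⁻¹ • iteratedFDeriv 𝕜 j f x fun _ ↦ y := by
    rw [← hp.factorial_smul y j, ← Nat.cast_smul_eq_nsmul 𝕜,
      inv_smul_smul₀ (Nat.cast_ne_zero.2 j.factorial_ne_zero)]
  have hsum (y : E) :
      p.partialSum (n + 1) y = (n ! : 𝕜)⁻¹ • iteratedFDeriv 𝕜 n f x fun _ ↦ y := by
    rw [FormalMultilinearSeries.partialSum, Finset.sum_range_succ, hcoeff n, add_eq_right]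
    refine Finset.sum_eq_zero fun j hj ↦ ?_
    simp [hcoeff, hlow j (Finset.mem_range.1 hj)]
  simpa only [hsum] using hp.hasFPowerSeriesAt.isBigO_sub_partialSum_pow (n + 1)

theorem iteratedFDeriv_apply_diag_eq_zero_of_mem_tangentConeAt (hf : AnalyticAt 𝕜 f x)
    (hlow : ∀ j < n, iteratedFDeriv 𝕜 j f x = 0) {t : E}
    (ht : t ∈ tangentConeAt 𝕜 (f ⁻¹' {0}) x) :
    (iteratedFDeriv 𝕜 n f x fun _ ↦ t) = 0 := by
  obtain ⟨c, d, hd, hfd, hcd⟩ := mem_tangentConeAt_iff_exists_seq.1 ht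
  set P : E → F := fun y ↦ (n ! : 𝕜)⁻¹ • iteratedFDeriv 𝕜 n f x fun _ ↦ y
  have hP_smul (a : 𝕜) (y : E) : P (a • y) = a ^ n • P y := by
    have := (iteratedFDeriv 𝕜 n f x).map_smul_univ (fun _ ↦ a) (fun _ ↦ y)
    rw [Fin.prod_const] at this
    rw [smul_comm, ← this]
  have hP_cont : Continuous P :=
    ((iteratedFDeriv 𝕜 n f x).cont.comp (continuous_pi fun _ ↦ continuous_id)).const_smul _
  -- On zeros of `f`, the leading term `P` equals minus the Taylor remainder.
  have hP_d : (fun k ↦ P (d k)) =O[atTop] fun k ↦ ‖d k‖ ^ (n + 1) := by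
    refine ((isBigO_sub_iteratedFDeriv_apply_diag hf hlow).comp_tendsto hd).congr' ?_ .rfl
      |>.neg_left.congr_left fun _ ↦ neg_neg _
    filter_upwards [hfd] with k hk
    simp_all [P]
  have hP_cd : (fun k ↦ P (c k • d k)) =O[atTop] fun k ↦ ‖c k • d k‖ ^ n * ‖d k‖ := by
    refine .of_norm_left (((isBigO_refl (fun k ↦ ‖c k‖ ^ n) atTop).mul hP_d.norm_left).congr ?_ ?_)
    · intro k
      rw [hP_smul, norm_smul (c k ^ n), norm_pow]
    · intro k
      rw [norm_smul]
      ring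
  have hlim : Tendsto (fun k ↦ ‖c k • d k‖ ^ n * ‖d k‖) atTop (𝓝 0) := by
    simpa using (hcd.norm.pow n).mul hd.norm
  have hPt : P t = 0 :=
    tendsto_nhds_unique ((hP_cont.tendsto t).comp hcd) (hP_cd.trans_tendsto hlim)
  simpa [P, Nat.factorial_ne_zero] using hPt

theorem eventually_eq_zero_of_iteratedFDeriv_eq_zero (hf : AnalyticAt 𝕜 f x)
    (h : ∀ n, iteratedFDeriv 𝕜 n f x = 0) : ∀ᶠ y in 𝓝 x, f y = 0 := by
  obtain ⟨p, r, hp⟩ := hf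
  filter_upwards [Metric.eball_mem_nhds x hp.r_pos] with y hy
  have hsum := hp.hasSum_iteratedFDeriv (y := y - x) (by
    simpa [Metric.mem_eball, edist_eq_enorm_sub] using hy)
  simp only [h, zero_apply, smul_zero, add_sub_cancel] at hsum
  exact hsum.unique hasSum_zero

end Taylor

section DirDeriv

variable {E F : Type*} [NormedAddCommGroup E] [NormedAddCommGroup F] [NormedSpace ℝ F]

section Normed

variable [NormedSpace ℝ E] {f : E → F} {x : E}

/-- The derivative of `f` along the constant vector field `v`, as an operator on functions, so that
derivatives along different vectors can be composed. It is defined through `fderiv` rather than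
`lineDeriv` to be linear in `v`. -/
def dirDeriv (v : E) (f : E → F) : E → F := fun x ↦ fderiv ℝ f x v

theorem analyticAt_dirDeriv [CompleteSpace F] (hf : AnalyticAt ℝ f x) (v : E) :
    AnalyticAt ℝ (dirDeriv v f) x :=
  ((ContinuousLinearMap.apply ℝ F v).analyticAt _).comp hf.fderiv

theorem dirDeriv_dirDeriv_apply (hf : ContDiffAt ℝ 2 f x) (v w : E) :
    dirDeriv v (dirDeriv w f) x = fderiv ℝ (fderiv ℝ f) x v w := by
  have hf' : DifferentiableAt ℝ (fderiv ℝ f) x :=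
    (hf.fderiv_right (m := 1) le_rfl).differentiableAt one_ne_zero
  have hfw : HasFDerivAt (dirDeriv w f) _ x :=
    (ContinuousLinearMap.apply ℝ F w).hasFDerivAt.comp x hf'.hasFDerivAt
  exact congr($hfw.fderiv v)

theorem dirDeriv_comm (hf : ContDiffAt ℝ 2 f x) (v w : E) :
    dirDeriv v (dirDeriv w f) x = dirDeriv w (dirDeriv v f) x := by
  rw [dirDeriv_dirDeriv_apply hf, dirDeriv_dirDeriv_apply hf]
  exact hf.isSymmSndFDerivAt (by simp) v w

theorem dirDeriv_comm_eventuallyEq [CompleteSpace F] (hf : AnalyticAt ℝ f x) (v w : E) :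
    dirDeriv v (dirDeriv w f) =ᶠ[𝓝 x] dirDeriv w (dirDeriv v f) :=
  hf.eventually_analyticAt.mono fun _ hy ↦ dirDeriv_comm hy.contDiffAt v w

theorem iteratedFDeriv_succ_apply_dirDeriv {n : ℕ} (hf : ContDiffAt ℝ (n + 1) f x)
    (m : Fin (n + 1) → E) :
    iteratedFDeriv ℝ (n + 1) f x m =
      iteratedFDeriv ℝ n (dirDeriv (m (Fin.last n)) f) x (Fin.init m) := by
  have h := (ContinuousLinearMap.apply ℝ F (m (Fin.last n))).iteratedFDeriv_comp_left
    (hf.fderiv_right le_rfl) (le_refl (n : WithTop ℕ∞))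
  exact (iteratedFDeriv_succ_apply_right m).trans (congr($h (Fin.init m))).symm

theorem iteratedFDeriv_dirDeriv_eq_zero {n : ℕ} (hf : ContDiffAt ℝ (n + 1) f x)
    (h : iteratedFDeriv ℝ (n + 1) f x = 0) (v : E) : iteratedFDeriv ℝ n (dirDeriv v f) x = 0 := by
  ext m
  simpa [h] using (iteratedFDeriv_succ_apply_dirDeriv hf (Fin.snoc m v)).symm

theorem iteratedFDeriv_succ_eq_zero_of_dirDeriv_basis {ι : Type*} {n : ℕ} (b : Basis ι ℝ E)
    (hf : ContDiffAt ℝ (n + 1) f x)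
    (h : ∀ i, iteratedFDeriv ℝ n (dirDeriv (b i) f) x = 0) :
    iteratedFDeriv ℝ (n + 1) f x = 0 := by
  have hbasis (i : ι) (m : Fin n → E) : iteratedFDeriv ℝ n (fderiv ℝ f) x m (b i) = 0 := by
    simpa [h, iteratedFDeriv_succ_apply_right] using
      iteratedFDeriv_succ_apply_dirDeriv hf (Fin.snoc m (b i))
  ext m
  rw [iteratedFDeriv_succ_apply_right]
  have : (iteratedFDeriv ℝ n (fderiv ℝ f) x (Fin.init m) : E →ₗ[ℝ] F) = 0 :=
    b.ext fun i ↦ hbasis i _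
  exact congr($this (m (Fin.last n)))

end Normed

variable [InnerProductSpace ℝ E] [FiniteDimensional ℝ E] {f : E → F} {x : E}

theorem laplacian_eq_sum_dirDeriv_dirDeriv {ι : Type*} [Fintype ι]
    (b : OrthonormalBasis ι ℝ E) (hf : ContDiffAt ℝ 2 f x) :
    Δ f x = ∑ i, dirDeriv (b i) (dirDeriv (b i) f) x := by
  simp [laplacian_eq_iteratedFDeriv_orthonormalBasis f b, iteratedFDeriv_two_apply,
    dirDeriv_dirDeriv_apply hf]

theorem laplacian_eventuallyEq_sum_dirDeriv_dirDeriv [CompleteSpace F] {ι : Type*} [Fintype ι]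
    (b : OrthonormalBasis ι ℝ E) (hf : AnalyticAt ℝ f x) :
    Δ f =ᶠ[𝓝 x] fun y ↦ ∑ i, dirDeriv (b i) (dirDeriv (b i) f) y :=
  hf.eventually_analyticAt.mono fun _ hy ↦ laplacian_eq_sum_dirDeriv_dirDeriv b hy.contDiffAt

theorem analyticAt_laplacian [CompleteSpace F] (hf : AnalyticAt ℝ f x) :
    AnalyticAt ℝ (Δ f) x := by
  set b := stdOrthonormalBasis ℝ E
  refine AnalyticAt.congr ?_ (laplacian_eventuallyEq_sum_dirDeriv_dirDeriv b hf).symm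
  exact Finset.univ.analyticAt_fun_sum fun i _ ↦
    analyticAt_dirDeriv (analyticAt_dirDeriv hf (b i)) (b i)

theorem laplacian_dirDeriv [CompleteSpace F] (hf : AnalyticAt ℝ f x) (v : E) :
    Δ (dirDeriv v f) x = dirDeriv v (Δ f) x := by
  set b := stdOrthonormalBasis ℝ E
  have hterm (w : E) :
      dirDeriv w (dirDeriv w (dirDeriv v f)) x = dirDeriv v (dirDeriv w (dirDeriv w f)) x :=
    calc dirDeriv w (dirDeriv w (dirDeriv v f)) x
      _ = dirDeriv w (dirDeriv v (dirDeriv w f)) x :=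
        congr($((dirDeriv_comm_eventuallyEq hf w v).fderiv_eq) w)
      _ = dirDeriv v (dirDeriv w (dirDeriv w f)) x :=
        dirDeriv_comm (analyticAt_dirDeriv hf w).contDiffAt w v
  have hdiff (w : E) : DifferentiableAt ℝ (dirDeriv w (dirDeriv w f)) x :=
    (analyticAt_dirDeriv (analyticAt_dirDeriv hf w) w).differentiableAt
  rw [laplacian_eq_sum_dirDeriv_dirDeriv b (analyticAt_dirDeriv hf v).contDiffAt, dirDeriv,
    (laplacian_eventuallyEq_sum_dirDeriv_dirDeriv b hf).fderiv_eq,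
    fderiv_fun_sum fun i _ ↦ hdiff (b i), sum_apply]
  exact Finset.sum_congr rfl fun i _ ↦ hterm (b i)

end DirDeriv

section PlaneLaplacian

variable {E F : Type*} [NormedAddCommGroup E] [InnerProductSpace ℝ E] [FiniteDimensional ℝ E]
  [NormedAddCommGroup F] [NormedSpace ℝ F] [CompleteSpace F] {f : E → F} {x : E}

theorem iteratedFDeriv_dirDeriv_dirDeriv_apply_eq_zero {n : ℕ} (b : OrthonormalBasis (Fin 2) ℝ E)
    (hf : AnalyticAt ℝ f x) (hΔ : iteratedFDeriv ℝ n (Δ f) x = 0) {m : Fin n → E}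
    (h : ∀ i, iteratedFDeriv ℝ n (dirDeriv (b 0) (dirDeriv (b i) f)) x m = 0) (i k : Fin 2) :
    iteratedFDeriv ℝ n (dirDeriv (b k) (dirDeriv (b i) f)) x m = 0 := by
  have hcomm := dirDeriv_comm_eventuallyEq hf (b 1) (b 0)
  have hsub : dirDeriv (b 1) (dirDeriv (b 1) f) =ᶠ[𝓝 x]
      Δ f - dirDeriv (b 0) (dirDeriv (b 0) f) := by
    filter_upwards [laplacian_eventuallyEq_sum_dirDeriv_dirDeriv b hf] with y hy
    simp [hy]
  match i, k with
  | i, 0 => exact h i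
  | 0, 1 => simpa only [(hcomm.iteratedFDeriv ℝ n).eq_of_nhds] using h 1
  | 1, 1 =>
    have hd (v w : E) : AnalyticAt ℝ (dirDeriv v (dirDeriv w f)) x :=
      analyticAt_dirDeriv (analyticAt_dirDeriv hf w) v
    simp [(hsub.iteratedFDeriv ℝ n).eq_of_nhds, iteratedFDeriv_sub_apply
      (analyticAt_laplacian hf).contDiffAt (hd _ _).contDiffAt, hΔ, h 0]

theorem iteratedFDeriv_succ_eq_zero_of_laplacian {n : ℕ} (b : OrthonormalBasis (Fin 2) ℝ E)
    (hf : AnalyticAt ℝ f x) (hΔ : ∀ j < n, iteratedFDeriv ℝ j (Δ f) x = 0)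
    (hdiag : ∀ i, (iteratedFDeriv ℝ n (dirDeriv (b i) f) x fun _ ↦ b 0) = 0) :
    iteratedFDeriv ℝ (n + 1) f x = 0 := by
  refine iteratedFDeriv_succ_eq_zero_of_dirDeriv_basis b.toBasis hf.contDiffAt fun i ↦ ?_
  rw [b.coe_toBasis]
  induction n generalizing f i with
  | zero =>
    ext m
    simpa using hdiag i
  | succ n ih =>
    have hfi : AnalyticAt ℝ (dirDeriv (b i) f) x := analyticAt_dirDeriv hf (b i)
    have hdiag₀ (i : Fin 2) :
        (iteratedFDeriv ℝ n (dirDeriv (b 0) (dirDeriv (b i) f)) x fun _ ↦ b 0) = 0 :=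
      (iteratedFDeriv_succ_apply_dirDeriv (analyticAt_dirDeriv hf (b i)).contDiffAt
        fun _ ↦ b 0).symm.trans (hdiag i)
    have hlap : Δ (dirDeriv (b i) f) =ᶠ[𝓝 x] dirDeriv (b i) (Δ f) :=
      hf.eventually_analyticAt.mono fun y hy ↦ laplacian_dirDeriv hy (b i)
    have hΔi (j : ℕ) (hj : j < n) : iteratedFDeriv ℝ j (Δ (dirDeriv (b i) f)) x = 0 := by
      rw [(hlap.iteratedFDeriv ℝ j).eq_of_nhds]
      exact iteratedFDeriv_dirDeriv_eq_zero (analyticAt_laplacian hf).contDiffAt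
        (hΔ (j + 1) (by lia)) (b i)
    refine iteratedFDeriv_succ_eq_zero_of_dirDeriv_basis b.toBasis hfi.contDiffAt fun k ↦ ?_
    rw [b.coe_toBasis]
    exact ih hfi hΔi
      (iteratedFDeriv_dirDeriv_dirDeriv_apply_eq_zero b hf (hΔ n n.lt_succ_self) hdiag₀ i) k

theorem exists_orthonormalBasis_apply_zero_eq (hE : finrank ℝ E = 2) {t : E} (ht : t ≠ 0) :
    ∃ b : OrthonormalBasis (Fin 2) ℝ E, b 0 = ‖t‖⁻¹ • t := by
  have hv : Orthonormal ℝ (({0} : Set (Fin 2)).domRestrict fun _ ↦ ‖t‖⁻¹ • t) := by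
    refine ⟨fun _ ↦ norm_smul_inv_norm ht, fun i j hij ↦ (hij (Subsingleton.elim i j)).elim⟩
  obtain ⟨b, hb⟩ := hv.exists_orthonormalBasis_extension_of_card_eq (by simp [hE])
  exact ⟨b, hb 0 rfl⟩

theorem iteratedFDeriv_succ_eq_zero_of_mem_tangentConeAt {n : ℕ} (hE : finrank ℝ E = 2)
    (hf : AnalyticAt ℝ f x) (hlow : ∀ j < n, iteratedFDeriv ℝ (j + 1) f x = 0)
    (hΔ : ∀ j < n, iteratedFDeriv ℝ j (Δ f) x = 0) {t : E}
    (ht : t ∈ tangentConeAt ℝ {y | fderiv ℝ f y = 0} x) (ht₀ : t ≠ 0) :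
    iteratedFDeriv ℝ (n + 1) f x = 0 := by
  obtain ⟨b, hb⟩ := exists_orthonormalBasis_apply_zero_eq hE ht₀
  refine iteratedFDeriv_succ_eq_zero_of_laplacian b hf hΔ fun i ↦ ?_
  have hlow' (j : ℕ) (hj : j < n) : iteratedFDeriv ℝ j (dirDeriv (b i) f) x = 0 :=
    iteratedFDeriv_dirDeriv_eq_zero hf.contDiffAt (hlow j hj) (b i)
  have ht' : t ∈ tangentConeAt ℝ (dirDeriv (b i) f ⁻¹' {0}) x :=
    tangentConeAt_mono (fun y (hy : fderiv ℝ f y = 0) ↦ by simp [dirDeriv, hy]) ht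
  rw [hb]
  have hsmul := (iteratedFDeriv ℝ n (dirDeriv (b i) f) x).map_smul_univ (fun _ ↦ ‖t‖⁻¹) fun _ ↦ t
  rw [hsmul, iteratedFDeriv_apply_diag_eq_zero_of_mem_tangentConeAt
    (analyticAt_dirDeriv hf (b i)) hlow' ht', smul_zero]

theorem eventually_eq_of_laplacian_eq_smul_sub (hE : finrank ℝ E = 2) (hf : AnalyticAt ℝ f x)
    {c : ℝ} (hΔ : ∀ᶠ y in 𝓝 x, Δ f y = c • (f y - f x))
    (hacc : AccPt x (𝓟 {y | fderiv ℝ f y = 0})) : ∀ᶠ y in 𝓝 x, f y = f x := by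
  obtain ⟨t, ht, ht₀⟩ := tangentConeAt_nonempty_of_properSpace (𝕜 := ℝ) hacc
  set g : E → F := fun y ↦ f y - f x
  have hg : AnalyticAt ℝ g x := hf.sub analyticAt_const
  have hΔg : Δ g =ᶠ[𝓝 x] c • g := by
    filter_upwards [hΔ, hf.eventually_analyticAt] with y hy hfy
    rw [Pi.smul_apply, ← hy]
    simpa using! hfy.contDiffAt.laplacian_sub (contDiffAt_const (c := f x))
  have htg : t ∈ tangentConeAt ℝ {y | fderiv ℝ g y = 0} x := by
    simpa [g, fderiv_sub_const] using ht
  have hzero (n : ℕ) : iteratedFDeriv ℝ n g x = 0 := by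
    induction n using Nat.strong_induction_on with
    | _ n ih =>
      cases n with
      | zero =>
        ext
        simp [g]
      | succ n =>
        refine iteratedFDeriv_succ_eq_zero_of_mem_tangentConeAt hE hg
          (fun j hj ↦ ih (j + 1) (by lia)) (fun j hj ↦ ?_) htg ht₀
        rw [(hΔg.iteratedFDeriv ℝ j).eq_of_nhds,
          iteratedFDeriv_const_smul_apply hg.contDiffAt, ih j (by lia), smul_zero]
  exact (eventually_eq_zero_of_iteratedFDeriv_eq_zero hg hzero).mono fun y ↦ sub_eq_zero.1

end PlaneLaplacian

section HausdorffDimension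

variable {E F : Type*} [NormedAddCommGroup E] [NormedSpace ℝ E]
  [NormedAddCommGroup F] [NormedSpace ℝ F] {f : E → F}

theorem exists_holderOnWith_two_fderiv_eq_zero {x : E} (hf : ContDiffAt ℝ 2 f x) :
    ∃ K : ℝ≥0, ∃ t ∈ 𝓝 x, HolderOnWith K 2 f ({y | fderiv ℝ f y = 0} ∩ t) := by
  obtain ⟨K, t, ht, hK⟩ := (hf.fderiv_right (m := 1) le_rfl).exists_lipschitzOnWith
  have hdiff : ∀ᶠ y in 𝓝 x, DifferentiableAt ℝ f y :=
    (hf.eventually (by simp)).mono fun y hy ↦ hy.differentiableAt two_ne_zero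
  obtain ⟨r, hr, hball⟩ := Metric.mem_nhds_iff.1 (inter_mem ht hdiff)
  refine ⟨K, ball x r, ball_mem_nhds x hr, ?_⟩
  rintro y ⟨hy₀, hy⟩ z ⟨-, hz⟩
  have hseg : segment ℝ y z ⊆ t ∩ {w | DifferentiableAt ℝ f w} :=
    ((convex_ball x r).segment_subset hy hz).trans hball
  have hbound (w : E) (hw : w ∈ segment ℝ y z) : ‖fderiv ℝ f w‖ ≤ K * ‖z - y‖ :=
    calc ‖fderiv ℝ f w‖ = dist (fderiv ℝ f w) (fderiv ℝ f y) := by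
          rw [show fderiv ℝ f y = 0 from hy₀, dist_zero_right]
      _ ≤ K * dist w y := hK.dist_le_mul w (hseg hw).1 y (hball hy).1
      _ ≤ K * ‖z - y‖ := by
        rw [← dist_eq_norm, dist_comm z]
        gcongr
        exact segment_subset_closedBall_left y z hw
  have hmvt : ‖f z - f y‖ ≤ K * ‖z - y‖ * ‖z - y‖ :=
    (convex_segment y z).norm_image_sub_le_of_norm_fderiv_le (fun w hw ↦ (hseg hw).2) hbound
      (left_mem_segment ℝ y z) (right_mem_segment ℝ y z)
  rw [edist_comm, edist_comm y, edist_eq_enorm_sub, edist_eq_enorm_sub]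
  have : ‖f z - f y‖₊ ≤ K * ‖z - y‖₊ ^ 2 := by
    rw [pow_two, ← mul_assoc]
    exact hmvt
  simpa [enorm] using! (ENNReal.coe_le_coe.2 this)

theorem dimH_image_le_div_two_of_fderiv_eq_zero [SecondCountableTopology E] {s : Set E}
    (hf : ∀ x ∈ s, ContDiffAt ℝ 2 f x) (hs : ∀ x ∈ s, fderiv ℝ f x = 0) :
    dimH (f '' s) ≤ dimH s / 2 := by
  refine mod_cast dimH_image_le_of_locally_holder_on (r := 2) two_pos fun x hx ↦ ?_
  obtain ⟨K, t, ht, hK⟩ := exists_holderOnWith_two_fderiv_eq_zero (hf x hx)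
  exact ⟨K, s ∩ t, inter_mem self_mem_nhdsWithin (mem_nhdsWithin_of_mem_nhds ht),
    hK.mono <| inter_subset_inter_left t hs⟩

theorem subsingleton_of_isPreconnected_of_dimH_lt_one {X : Type*} [MetricSpace X] {s : Set X}
    (hs : IsPreconnected s) (hdim : dimH s < 1) : s.Subsingleton := by
  intro x hx y hy
  by_contra hxy
  have hLip : LipschitzWith 1 (dist x) := LipschitzWith.dist_right x
  have hseg : segment ℝ 0 (dist x y) ⊆ dist x '' s := by
    refine ((hs.image _ hLip.continuous.continuousOn).ordConnected.convex).segment_subset ?_ ?_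
    · exact ⟨x, hx, dist_self x⟩
    · exact ⟨y, hy, rfl⟩
  refine hdim.not_ge ?_
  calc 1 = dimH (segment ℝ 0 (dist x y)) := (Real.dimH_segment (dist_ne_zero.2 hxy).symm).symm
    _ ≤ dimH (dist x '' s) := dimH_mono hseg
    _ ≤ dimH s := hLip.dimH_image_le s

end HausdorffDimension

section LevelSets

variable {E F : Type*} [NormedAddCommGroup E] [NormedSpace ℝ E] [FiniteDimensional ℝ E]
  [NormedAddCommGroup F] [NormedSpace ℝ F] {f : E → F}

theorem exists_antilipschitzWith_prod_ker (L : E →L[ℝ] F) :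
    ∃ (π : E →L[ℝ] L.ker) (K : ℝ≥0), 0 < K ∧ AntilipschitzWith K (L.prod π) := by
  obtain ⟨π, hπ⟩ := Submodule.ClosedComplemented.of_finiteDimensional L.ker
  refine ⟨π, LinearMap.exists_antilipschitzWith (L.prod π : E →ₗ[ℝ] F × L.ker) ?_⟩
  refine LinearMap.ker_eq_bot'.2 fun v hv ↦ ?_
  have hLv : L v = 0 := congr(($hv).1)
  have hπv : π v = 0 := congr(($hv).2)
  exact congr(Subtype.val $((hπ ⟨v, hLv⟩).symm.trans hπv))

theorem exists_mem_nhds_dimH_inter_preimage_le {L : E →L[ℝ] F} {x : E}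
    (hf : HasStrictFDerivAt f L x) (c : F) :
    ∃ t ∈ 𝓝 x, dimH (t ∩ f ⁻¹' {c}) ≤ finrank ℝ L.ker := by
  obtain ⟨π, K, hK, hLπ⟩ := exists_antilipschitzWith_prod_ker L
  obtain ⟨t, ht, happrox⟩ :=
    hf.approximates_deriv_on_nhds (c := K⁻¹ / 2) (.inr (half_pos (inv_pos.2 hK)))
  refine ⟨t, ht, ?_⟩
  set s := t ∩ f ⁻¹' {c}
  -- On a level set `L` contracts differences, so they are controlled by `π` alone.
  have hanti : AntilipschitzWith K (s.domRestrict π) := by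
    refine .of_le_mul_dist fun ⟨y, hy⟩ ⟨z, hz⟩ ↦ ?_
    have hL : dist (L y) (L z) ≤ (K⁻¹ / 2 : ℝ≥0) * dist y z := by
      have := happrox y hy.1 z hz.1
      rwa [show f y = c from hy.2, show f z = c from hz.2, sub_self, zero_sub, norm_neg, map_sub,
        ← dist_eq_norm, ← dist_eq_norm] at this
    have hmax : dist y z ≤ K * max (dist (L y) (L z)) (dist (π y) (π z)) := hLπ.le_mul_dist y z
    rcases max_cases (dist (L y) (L z)) (dist (π y) (π z)) with ⟨h, -⟩ | ⟨h, -⟩ <;> rw [h] at hmax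
    · have hle : dist y z ≤ dist y z / 2 := by
        calc dist y z ≤ K * ((K⁻¹ / 2 : ℝ≥0) * dist y z) := hmax.trans (by gcongr)
          _ = dist y z / 2 := by
            push_cast
            field_simp
      have hyz : dist y z = 0 := by linarith [dist_nonneg (x := y) (y := z)]
      exact hyz.trans_le (by positivity)
    · exact hmax
  have himage : dimH (univ : Set s) ≤ dimH (univ : Set L.ker) :=
    (hanti.le_dimH_image univ).trans (dimH_mono (subset_univ _))
  calc dimH s = dimH (univ : Set s) := by
        rw [← (isometry_subtype_coe (s := s)).dimH_image, image_univ, Subtype.range_coe]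
    _ ≤ dimH (univ : Set L.ker) := himage
    _ = finrank ℝ L.ker := Real.dimH_univ_eq_finrank _

theorem dimH_le_of_finrank_ker_le {f' : E → E →L[ℝ] F} {s : Set E} {c : F} {n : ℕ}
    (hs : ∀ x ∈ s, f x = c) (hf : ∀ x ∈ s, HasStrictFDerivAt f (f' x) x)
    (hker : ∀ x ∈ s, finrank ℝ (f' x).ker ≤ n) : dimH s ≤ n := by
  by_contra! h
  obtain ⟨x, hx, hlt⟩ := exists_mem_nhdsWithin_lt_dimH_of_lt_dimH h
  obtain ⟨t, ht, hdim⟩ := exists_mem_nhds_dimH_inter_preimage_le (hf x hx) c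
  refine (hlt (t ∩ f ⁻¹' {c}) ?_).not_ge (hdim.trans (mod_cast hker x hx))
  exact inter_mem (mem_nhdsWithin_of_mem_nhds ht) (mem_of_superset self_mem_nhdsWithin hs)

end LevelSets

section CriticalSets

variable {E F : Type*} [NormedAddCommGroup E] [InnerProductSpace ℝ E] [FiniteDimensional ℝ E]
  [NormedAddCommGroup F] [NormedSpace ℝ F] {f : E → F} {s : Set E}

theorem laplacian_eq_zero_of_fderiv_fderiv_eq_zero {x : E} (h : fderiv ℝ (fderiv ℝ f) x = 0) :
    Δ f x = 0 := by
  simp [laplacian_eq_iteratedFDeriv_stdOrthonormalBasis, iteratedFDeriv_two_apply, h]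

theorem dimH_le_of_fderiv_eq_zero_of_laplacian_ne_zero {n : ℕ} (hE : finrank ℝ E = n + 1)
    (hf : ∀ x ∈ s, ContDiffAt ℝ 2 f x) (hcrit : ∀ x ∈ s, fderiv ℝ f x = 0)
    (hΔ : ∀ x ∈ s, Δ f x ≠ 0) : dimH s ≤ n := by
  refine dimH_le_of_finrank_ker_le hcrit (f' := fderiv ℝ (fderiv ℝ f)) (fun x hx ↦ ?_) fun x hx ↦ ?_
  · exact ((hf x hx).fderiv_right (m := 1) le_rfl).hasStrictFDerivAt one_ne_zero
  · refine Nat.le_of_lt_succ <| (Submodule.finrank_lt fun htop ↦ hΔ x hx ?_).trans_eq hE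
    refine laplacian_eq_zero_of_fderiv_fderiv_eq_zero ?_
    exact ContinuousLinearMap.coe_injective (LinearMap.ker_eq_top.1 htop)

theorem subsingleton_image_of_fderiv_eq_zero_of_laplacian_ne_zero (hE : finrank ℝ E = 2)
    (hs : IsPreconnected s) (hf : ∀ x ∈ s, ContDiffAt ℝ 2 f x) (hcrit : ∀ x ∈ s, fderiv ℝ f x = 0)
    (hΔ : ∀ x ∈ s, Δ f x ≠ 0) : (f '' s).Subsingleton := by
  refine subsingleton_of_isPreconnected_of_dimH_lt_one
    (hs.image f fun x hx ↦ (hf x hx).continuousAt.continuousWithinAt) ?_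
  calc dimH (f '' s) ≤ dimH s / 2 := dimH_image_le_div_two_of_fderiv_eq_zero hf hcrit
    _ ≤ 1 / 2 := by
      gcongr
      exact mod_cast dimH_le_of_fderiv_eq_zero_of_laplacian_ne_zero hE hf hcrit hΔ
    _ < 1 := ENNReal.half_lt_self one_ne_zero ENNReal.one_ne_top

theorem nonzero_constant_on_connected_critical_set_general [CompleteSpace F]
    (hE : finrank ℝ E = 2) {U : Set E} (hUo : IsOpen U) (hUc : IsPreconnected U) {lam : ℝ}
    {u : E → F} (hu : AnalyticOnNhd ℝ u U) (hne : ∃ z ∈ U, u z ≠ 0)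
    (heq : ∀ z ∈ U, Δ u z + lam • u z = 0) {A : Set E} (hA : A ⊆ U) (hAc : IsPreconnected A)
    (hnt : A.Nontrivial) (hcrit : ∀ z ∈ A, fderiv ℝ u z = 0) :
    (∀ z ∈ A, ∀ w ∈ A, u z = u w) ∧ ∀ z ∈ A, u z ≠ 0 := by
  by_cases hΔ : ∃ z ∈ A, Δ u z = 0
  · obtain ⟨z, hz, hΔz⟩ := hΔ
    have hlam : lam • u z = 0 := by simpa [hΔz] using heq z (hA hz)
    have hΔu : ∀ᶠ y in 𝓝 z, Δ u y = (-lam) • (u y - u z) := by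
      filter_upwards [hUo.mem_nhds (hA hz)] with y hy
      rw [neg_smul, smul_sub, hlam, sub_zero, eq_neg_iff_add_eq_zero, heq y hy]
    have hacc : AccPt z (𝓟 {y | fderiv ℝ u y = 0}) :=
      (hAc.preperfect_of_nontrivial hnt z hz).mono (principal_mono.2 hcrit)
    have hconst : EqOn u (fun _ ↦ u z) U :=
      hu.eqOn_of_preconnected_of_eventuallyEq analyticOnNhd_const hUc (hA hz)
        (eventually_eq_of_laplacian_eq_smul_sub hE (hu z (hA hz)) hΔu hacc)
    obtain ⟨w, hw, huw⟩ := hne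
    refine ⟨fun x hx y hy ↦ ?_, fun x hx ↦ ?_⟩
    · rw [hconst (hA hx), hconst (hA hy)]
    · rwa [hconst (hA hx), ← hconst hw]
  · push Not at hΔ
    have hsub := subsingleton_image_of_fderiv_eq_zero_of_laplacian_ne_zero hE hAc
      (fun z hz ↦ (hu z (hA hz)).contDiffAt) hcrit hΔ
    refine ⟨fun z hz w hw ↦ hsub (mem_image_of_mem u hz) (mem_image_of_mem u hw), fun z hz h ↦ ?_⟩
    exact hΔ z hz (by simpa [h] using heq z (hA hz))

end CriticalSets

theorem lap_eq_laplacian (u : E2 → ℝ) : lap u = Δ u := by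
  ext z
  simp only [lap, EuclideanSpace.basisFun_apply,
    laplacian_eq_iteratedFDeriv_orthonormalBasis u (EuclideanSpace.basisFun (Fin 2) ℝ)]
  refine Finset.sum_congr rfl fun i _ ↦ congrArg _ ?_
  ext j
  fin_cases j <;> rfl

/-- On a connected set of critical points with at least two points,
`u` is a nonzero constant. -/
theorem nonzero_constant_on_connected_critical_set
    (Ω U : Set E2) (hΩne : Ω.Nonempty) (hΩo : IsOpen Ω)
    (hΩb : Bornology.IsBounded Ω)
    (hUo : IsOpen U) (hUconn : IsConnected U) (hsub : closure Ω ⊆ U)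
    (lam : ℝ) (hlam : 0 < lam)
    (u : E2 → ℝ) (hu : AnalyticOnNhd ℝ u U)
    (hne : ∃ z ∈ U, u z ≠ 0)
    (heq : ∀ z ∈ U, lap u z + lam * u z = 0)
    (A : Set E2) (hA : A ⊆ closure Ω) (hconn : IsConnected A) (hnt : A.Nontrivial)
    (hcrit : ∀ z ∈ A, gradient u z = 0) :
    (∀ z ∈ A, ∀ w ∈ A, u z = u w) ∧ (∀ z ∈ A, u z ≠ 0) :=
  nonzero_constant_on_connected_critical_set_general finrank_euclideanSpace_fin hUo
    hUconn.isPreconnected hu hne (by simpa [lap_eq_laplacian] using heq) (hA.trans hsub)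
    hconn.isPreconnected hnt (by simpa [gradient] using hcrit)
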